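/- arXiv:2411.07000 — 2 statements merged into one kernel-verified Lean document; each statement's English description precedes it below -/
import Mathlib

section
/- Let G be a finite simple connected graph of order n ≥ 3 with maximum degree Δ(G). If G is isomorphic to one of the four graphs C₄, K₄, C₆, K₃,₃, then the distinguishing chromatic number of the middle graph of G satisfies χ_D(M(G)) = Δ(G) + 2. -/
open SimpleGraph

/-- The middle graph `M(G)`: vertices are `V(G) ⊕ E(G)`; two edges are adjacent
iff they are distinct and share an endpoint; a vertex and an edge are adjacent
iff the vertex is incident to the edge. -/
def middleGraph {V : Type*} (G : SimpleGraph V) : SimpleGraph (V ⊕ G.edgeSet) :=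
  SimpleGraph.fromRel fun x y =>
    match x, y with
    | Sum.inr e, Sum.inr f => e ≠ f ∧ ∃ v, v ∈ (e : Sym2 V) ∧ v ∈ (f : Sym2 V)
    | Sum.inl v, Sum.inr e => v ∈ (e : Sym2 V)
    | _, _ => False

/-- The subdivision graph `S(G)`: vertices are `V(G) ⊕ E(G)`; `v ∈ V(G)` and
`e ∈ E(G)` are adjacent iff `v` is incident to `e`. -/
def subdivisionGraph {V : Type*} (G : SimpleGraph V) : SimpleGraph (V ⊕ G.edgeSet) :=
  SimpleGraph.fromRel fun x y =>
    match x, y with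
    | Sum.inl v, Sum.inr e => v ∈ (e : Sym2 V)
    | _, _ => False

/-- The endline graph `G⁺`: to each vertex `v` of `G` (coded `Sum.inl v`) we attach a new
pendant vertex (coded `Sum.inr v`) via a new (endline) edge. -/
def endlineGraph {V : Type*} (G : SimpleGraph V) : SimpleGraph (V ⊕ V) :=
  SimpleGraph.fromRel fun x y =>
    match x, y with
    | Sum.inl u, Sum.inl v => G.Adj u v
    | Sum.inl v, Sum.inr u => v = u
    | _, _ => False

/-- A vertex coloring is distinguishing if the only automorphism preserving it is the identity. -/
def IsDistinguishingVertexColoring {V α : Type*} (G : SimpleGraph V) (c : V → α) : Prop :=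
  ∀ φ : G ≃g G, (∀ v, c (φ v) = c v) → ∀ v, φ v = v

/-- A proper vertex coloring assigns different colors to adjacent vertices. -/
def IsProperVertexColoring {V α : Type*} (G : SimpleGraph V) (c : V → α) : Prop :=
  ∀ u v, G.Adj u v → c u ≠ c v

/-- The distinguishing number `D(G)`. -/
noncomputable def distinguishingNumber {V : Type*} (G : SimpleGraph V) : ℕ :=
  sInf {r | ∃ c : V → Fin r, IsDistinguishingVertexColoring G c}

/-- The distinguishing chromatic number `χ_D(G)`. -/
noncomputable def distinguishingChromaticNumber {V : Type*} (G : SimpleGraph V) : ℕ :=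
  sInf {r | ∃ c : V → Fin r,
    IsProperVertexColoring G c ∧ IsDistinguishingVertexColoring G c}

/-- An edge coloring is distinguishing if the only automorphism preserving it is the identity. -/
def IsDistinguishingEdgeColoring {V α : Type*} (G : SimpleGraph V) (c : G.edgeSet → α) : Prop :=
  ∀ φ : G ≃g G, (∀ e, c (φ.mapEdgeSet e) = c e) → ∀ v, φ v = v

/-- A proper edge coloring assigns different colors to distinct edges sharing an endpoint. -/
def IsProperEdgeColoring {V α : Type*} (G : SimpleGraph V) (c : G.edgeSet → α) : Prop :=
  ∀ e f : G.edgeSet, e ≠ f → (∃ v, v ∈ (e : Sym2 V) ∧ v ∈ (f : Sym2 V)) → c e ≠ c f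

/-- The distinguishing index `D'(G)`. -/
noncomputable def distinguishingIndex {V : Type*} (G : SimpleGraph V) : ℕ :=
  sInf {r | ∃ c : G.edgeSet → Fin r, IsDistinguishingEdgeColoring G c}

/-- The distinguishing chromatic index `χ'_D(G)`. -/
noncomputable def distinguishingChromaticIndex {V : Type*} (G : SimpleGraph V) : ℕ :=
  sInf {r | ∃ c : G.edgeSet → Fin r,
    IsProperEdgeColoring G c ∧ IsDistinguishingEdgeColoring G c}

/-- The total distinguishing number `D''(G)`: the least `d` such that there is a (not
necessarily proper) coloring of vertices and edges with `d` colors preserved only by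
the identity automorphism. -/
noncomputable def totalDistinguishingNumber {V : Type*} (G : SimpleGraph V) : ℕ :=
  sInf {d | ∃ (cV : V → Fin d) (cE : G.edgeSet → Fin d),
    ∀ φ : G ≃g G,
      ((∀ v, cV (φ v) = cV v) ∧ (∀ e, cE (φ.mapEdgeSet e) = cE e)) → ∀ v, φ v = v}

/-!
A proper edge coloring `c` of a connected graph extends to a proper distinguishing coloring of the
middle graph by two new colors, one for a single vertex `r` and one for all other vertices: a
color-preserving automorphism fixes `r`, and if it fixes a vertex, it fixes the incident edges, as
their colors differ, and hence the neighbors.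

In a proper coloring of the middle graph of a `d`-regular graph with only `d + 1` colors, the color
of a vertex is the one that is missing on its edges. So every automorphism of the graph that
preserves the edge colors acts on the middle graph preserving all colors. Each of the four graphs
is `d`-regular with a proper edge coloring by `d` colors, and every proper edge coloring by `d + 1`
colors has a nontrivial symmetry: a rotation or reflection for `C₄` and `C₆`, a double
transposition for `K₄`, and an exchange of the two parts for `K₃,₃`.
-/

section DistinguishingColorings

variable {V W α β : Type*} {G : SimpleGraph V} {H : SimpleGraph W}

lemma IsProperVertexColoring.comp_injective {c : V → α} (hc : IsProperVertexColoring G c)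
    {f : α → β} (hf : f.Injective) : IsProperVertexColoring G (f ∘ c) :=
  fun u v huv ↦ hf.ne (hc u v huv)

lemma IsProperVertexColoring.comp_iso {c : W → α} (hc : IsProperVertexColoring H c)
    (e : G ≃g H) : IsProperVertexColoring G (c ∘ e) :=
  fun u v huv ↦ hc (e u) (e v) (e.map_adj_iff.2 huv)

lemma IsDistinguishingVertexColoring.comp_injective {c : V → α}
    (hc : IsDistinguishingVertexColoring G c) {f : α → β} (hf : f.Injective) :
    IsDistinguishingVertexColoring G (f ∘ c) :=
  fun φ hφ ↦ hc φ fun v ↦ hf (hφ v)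

lemma IsDistinguishingVertexColoring.comp_iso {c : W → α}
    (hc : IsDistinguishingVertexColoring H c) (e : G ≃g H) :
    IsDistinguishingVertexColoring G (c ∘ e) := by
  intro φ hφ v
  have h := hc ((e.symm.trans φ).trans e) (fun w ↦ by simpa using hφ (e.symm w)) (e v)
  simpa using h

lemma distinguishingChromaticNumber_le_card [Fintype α] {c : V → α}
    (hp : IsProperVertexColoring G c) (hd : IsDistinguishingVertexColoring G c) :
    distinguishingChromaticNumber G ≤ Fintype.card α :=
  let f := Fintype.equivFin α
  Nat.sInf_le ⟨f ∘ c, hp.comp_injective f.injective, hd.comp_injective f.injective⟩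

lemma exists_coloring_of_distinguishingChromaticNumber_le [Finite V] {r : ℕ}
    (h : distinguishingChromaticNumber G ≤ r) :
    ∃ c : V → Fin r, IsProperVertexColoring G c ∧ IsDistinguishingVertexColoring G c := by
  have hne : {r | ∃ c : V → Fin r,
      IsProperVertexColoring G c ∧ IsDistinguishingVertexColoring G c}.Nonempty :=
    let f := Finite.equivFin V
    ⟨Nat.card V, f, fun u v huv ↦ f.injective.ne huv.ne, fun φ hφ v ↦ f.injective (hφ v)⟩
  obtain ⟨c, hp, hd⟩ := Nat.sInf_mem hne
  have hcast := Fin.castLE_injective h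
  exact ⟨_, hp.comp_injective hcast, hd.comp_injective hcast⟩

lemma distinguishingChromaticNumber_congr (e : G ≃g H) :
    distinguishingChromaticNumber G = distinguishingChromaticNumber H := by
  refine congrArg sInf (Set.ext fun r ↦ ⟨?_, ?_⟩)
  · rintro ⟨c, hp, hd⟩
    exact ⟨c ∘ e.symm, hp.comp_iso e.symm, hd.comp_iso e.symm⟩
  · rintro ⟨c, hp, hd⟩
    exact ⟨c ∘ e, hp.comp_iso e, hd.comp_iso e⟩

lemma apply_eq_of_adj_of_injOn_neighborSet {c : V → α} {φ : G ≃g G} (hφ : ∀ v, c (φ v) = c v)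
    {u v : V} (hu : φ u = u) (hc : Set.InjOn c (G.neighborSet u)) (huv : G.Adj u v) :
    φ v = v :=
  hc (by simpa [hu] using φ.map_adj_iff.2 huv) huv (hφ v)

lemma isProperEdgeColoring_iff_lineGraph {c : G.edgeSet → α} :
    IsProperEdgeColoring G c ↔ IsProperVertexColoring G.lineGraph c := by
  simp only [IsProperEdgeColoring, IsProperVertexColoring, lineGraph_adj_iff_exists, and_imp]

end DistinguishingColorings

lemma eq_of_notMem_range_of_injective {ι α : Type*} [Fintype ι] [Fintype α] {f : ι → α}
    (hf : f.Injective) (hcard : Fintype.card α ≤ Fintype.card ι + 1) {a b : α}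
    (ha : a ∉ Set.range f) (hb : b ∉ Set.range f) : a = b := by
  classical
  have himage : (Finset.univ.image f).card = Fintype.card ι := by
    rw [Finset.card_image_of_injective _ hf, Finset.card_univ]
  have hcompl : (Finset.univ.image f)ᶜ.card ≤ 1 := by
    rw [Finset.card_compl, himage]
    omega
  exact Finset.card_le_one.1 hcompl a (by simpa using ha) b (by simpa using hb)

section MiddleGraph

variable {V W α : Type*} {G : SimpleGraph V} {H : SimpleGraph W}

@[simp]
lemma middleGraph_adj_inl_inl {u v : V} : ¬ (middleGraph G).Adj (.inl u) (.inl v) := by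
  simp [middleGraph]

@[simp]
lemma middleGraph_adj_inl_inr {v : V} {e : G.edgeSet} :
    (middleGraph G).Adj (.inl v) (.inr e) ↔ v ∈ (e : Sym2 V) := by
  simp [middleGraph]

@[simp]
lemma middleGraph_adj_inr_inl {v : V} {e : G.edgeSet} :
    (middleGraph G).Adj (.inr e) (.inl v) ↔ v ∈ (e : Sym2 V) := by
  simp [middleGraph]

@[simp]
lemma middleGraph_adj_inr_inr {e f : G.edgeSet} :
    (middleGraph G).Adj (.inr e) (.inr f) ↔ G.lineGraph.Adj e f := by
  simp only [middleGraph, fromRel_adj, lineGraph_adj_iff_exists, ne_eq, Sum.inr.injEq]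
  grind

lemma apply_mem_mapEdgeSet_iff (σ : G ≃g H) {v : V} {e : G.edgeSet} :
    σ v ∈ (σ.mapEdgeSet e : Sym2 W) ↔ v ∈ (e : Sym2 V) := by
  change σ v ∈ Sym2.map σ (e : Sym2 V) ↔ _
  simp [Sym2.mem_map]

lemma lineGraph_adj_mapEdgeSet_iff (σ : G ≃g H) {e f : G.edgeSet} :
    H.lineGraph.Adj (σ.mapEdgeSet e) (σ.mapEdgeSet f) ↔ G.lineGraph.Adj e f := by
  simp only [lineGraph_adj_iff_exists, σ.mapEdgeSet.injective.ne_iff, σ.surjective.exists,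
    apply_mem_mapEdgeSet_iff]

/-- The isomorphism of middle graphs induced by an isomorphism of graphs. -/
def middleGraphCongr (σ : G ≃g H) : middleGraph G ≃g middleGraph H where
  toEquiv := Equiv.sumCongr σ.toEquiv σ.mapEdgeSet
  map_rel_iff' := by
    rintro (u | e) (v | f)
    · exact iff_of_false middleGraph_adj_inl_inl middleGraph_adj_inl_inl
    · exact middleGraph_adj_inl_inr.trans
        ((apply_mem_mapEdgeSet_iff σ).trans middleGraph_adj_inl_inr.symm)
    · exact middleGraph_adj_inr_inl.trans
        ((apply_mem_mapEdgeSet_iff σ).trans middleGraph_adj_inr_inl.symm)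
    · exact middleGraph_adj_inr_inr.trans
        ((lineGraph_adj_mapEdgeSet_iff σ).trans middleGraph_adj_inr_inr.symm)

lemma IsProperVertexColoring.isProperEdgeColoring_comp_inr {c : V ⊕ G.edgeSet → α}
    (hc : IsProperVertexColoring (middleGraph G) c) : IsProperEdgeColoring G (c ∘ Sum.inr) :=
  isProperEdgeColoring_iff_lineGraph.2 fun _ _ h ↦ hc _ _ (middleGraph_adj_inr_inr.2 h)

lemma IsProperEdgeColoring.injOn_incident {c : G.edgeSet → α} (hc : IsProperEdgeColoring G c)
    (v : V) : Set.InjOn c {e | v ∈ (e : Sym2 V)} := by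
  intro e he f hf hef
  by_contra hne
  exact hc e f hne ⟨v, he, hf⟩ hef

lemma IsProperEdgeColoring.injective_neighborSet {c : G.edgeSet → α}
    (hc : IsProperEdgeColoring G c) (v : V) :
    Function.Injective fun w : G.neighborSet v ↦ c ⟨s(v, w), w.2⟩ := by
  intro w w' h
  have hedge := hc.injOn_incident v (Sym2.mem_mk_left _ _) (Sym2.mem_mk_left _ _) h
  exact Subtype.ext (Sym2.congr_right.1 (Subtype.ext_iff.1 hedge))

lemma IsProperVertexColoring.apply_inl_eq_of_edge_colors_eq [Fintype α]
    {c : V ⊕ G.edgeSet → α} (hp : IsProperVertexColoring (middleGraph G) c) {σ : G ≃g G}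
    (hσ : ∀ e, c (.inr (σ.mapEdgeSet e)) = c (.inr e)) {v : V} [Fintype (G.neighborSet v)]
    (hdeg : Fintype.card α ≤ G.degree v + 1) : c (.inl (σ v)) = c (.inl v) := by
  have hinj := hp.isProperEdgeColoring_comp_inr.injective_neighborSet v
  refine eq_of_notMem_range_of_injective hinj (by rwa [G.card_neighborSet_eq_degree]) ?_ ?_
  · rintro ⟨w, hw⟩
    refine hp _ _ (middleGraph_adj_inr_inl.2 ?_) ((hσ _).trans hw)
    exact (apply_mem_mapEdgeSet_iff σ).2 (Sym2.mem_mk_left _ _)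
  · rintro ⟨w, hw⟩
    exact hp _ _ (middleGraph_adj_inr_inl.2 (Sym2.mem_mk_left _ _)) hw

lemma IsDistinguishingVertexColoring.isDistinguishingEdgeColoring_comp_inr [Fintype α]
    [G.LocallyFinite] {c : V ⊕ G.edgeSet → α}
    (hd : IsDistinguishingVertexColoring (middleGraph G) c)
    (hp : IsProperVertexColoring (middleGraph G) c)
    (hdeg : ∀ v, Fintype.card α ≤ G.degree v + 1) :
    IsDistinguishingEdgeColoring G (c ∘ Sum.inr) := by
  intro σ hσ v
  refine Sum.inl_injective (hd (middleGraphCongr σ) ?_ (.inl v))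
  rintro (u | e)
  · exact hp.apply_inl_eq_of_edge_colors_eq hσ (hdeg u)
  · exact hσ e

/-- The coloring of the middle graph that extends the edge coloring `c` by two new colors, one
reserved for the vertex `r` and the other one used on all remaining vertices. -/
def rootedColoring [DecidableEq V] (c : G.edgeSet → α) (r : V) : V ⊕ G.edgeSet → α ⊕ Bool :=
  Sum.elim (fun v ↦ .inr (decide (v = r))) (fun e ↦ .inl (c e))

section RootedColoring

variable [DecidableEq V] {c : G.edgeSet → α} {r : V}

lemma IsProperEdgeColoring.isProperVertexColoring_rootedColoring
    (hc : IsProperEdgeColoring G c) :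
    IsProperVertexColoring (middleGraph G) (rootedColoring c r) := by
  rintro (u | e) (v | f) h
  · exact absurd h middleGraph_adj_inl_inl
  · exact Sum.inr_ne_inl
  · exact Sum.inl_ne_inr
  · exact Sum.inl_injective.ne
      (isProperEdgeColoring_iff_lineGraph.1 hc e f (middleGraph_adj_inr_inr.1 h))

lemma IsProperEdgeColoring.injOn_rootedColoring_neighborSet_inl
    (hc : IsProperEdgeColoring G c) (v : V) :
    Set.InjOn (rootedColoring c r) ((middleGraph G).neighborSet (.inl v)) := by
  rintro (u | e) hu (w | f) hw h
  · exact absurd hu middleGraph_adj_inl_inl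
  · exact absurd hu middleGraph_adj_inl_inl
  · exact absurd hw middleGraph_adj_inl_inl
  · exact congrArg Sum.inr (hc.injOn_incident v (middleGraph_adj_inl_inr.1 hu)
      (middleGraph_adj_inl_inr.1 hw) (Sum.inl_injective h))

variable {φ : middleGraph G ≃g middleGraph G}
  (hφ : ∀ x, rootedColoring c r (φ x) = rootedColoring c r x)

include hφ

lemma exists_apply_inl_eq_inl (v : V) : ∃ w, φ (.inl v) = .inl w ∧ (w = r ↔ v = r) := by
  have h := hφ (.inl v)
  rcases hw : φ (.inl v) with w | e
  · exact ⟨w, rfl, by simpa [hw, rootedColoring] using h⟩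
  · simp [hw, rootedColoring] at h

lemma apply_inl_eq_of_adj (hc : IsProperEdgeColoring G c) {u v : V} (huv : G.Adj u v)
    (hu : φ (.inl u) = .inl u) : φ (.inl v) = .inl v := by
  let e : G.edgeSet := ⟨s(u, v), huv⟩
  have he : φ (.inr e) = .inr e :=
    apply_eq_of_adj_of_injOn_neighborSet hφ hu (hc.injOn_rootedColoring_neighborSet_inl u)
      (middleGraph_adj_inl_inr.2 (Sym2.mem_mk_left u v))
  obtain ⟨w, hw, -⟩ := exists_apply_inl_eq_inl hφ v
  have hwe : w ∈ s(u, v) := by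
    have h := φ.map_adj_iff.2 (middleGraph_adj_inr_inl (e := e).2 (Sym2.mem_mk_right u v))
    rwa [he, hw, middleGraph_adj_inr_inl] at h
  rcases Sym2.mem_iff.1 hwe with rfl | rfl
  · exact absurd (Sum.inl_injective (φ.injective (hu.trans hw.symm))) huv.ne
  · exact hw

end RootedColoring

lemma IsProperEdgeColoring.isDistinguishingVertexColoring_rootedColoring [DecidableEq V]
    {c : G.edgeSet → α} (hc : IsProperEdgeColoring G c) (hconn : G.Preconnected) (r : V) :
    IsDistinguishingVertexColoring (middleGraph G) (rootedColoring c r) := by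
  intro φ hφ
  have hroot : φ (.inl r) = .inl r := by
    obtain ⟨w, hw, hwr⟩ := exists_apply_inl_eq_inl hφ r
    rw [hw, hwr.2 rfl]
  have hvertex (v : V) : φ (.inl v) = .inl v := by
    induction (reachable_iff_reflTransGen r v).1 (hconn r v) with
    | refl => exact hroot
    | tail _ huv hu => exact apply_inl_eq_of_adj hφ hc huv hu
  rintro (v | ⟨e, he⟩)
  · exact hvertex v
  · induction e with
    | _ u v =>
      exact apply_eq_of_adj_of_injOn_neighborSet hφ (hvertex u)
        (hc.injOn_rootedColoring_neighborSet_inl u)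
        (middleGraph_adj_inl_inr.2 (Sym2.mem_mk_left u v))

lemma IsProperEdgeColoring.distinguishingChromaticNumber_middleGraph_le [Fintype α]
    {c : G.edgeSet → α} (hc : IsProperEdgeColoring G c) (hconn : G.Connected) :
    distinguishingChromaticNumber (middleGraph G) ≤ Fintype.card α + 2 := by
  classical
  obtain ⟨r⟩ := hconn.nonempty
  have h := distinguishingChromaticNumber_le_card
    (hc.isProperVertexColoring_rootedColoring (r := r))
    (hc.isDistinguishingVertexColoring_rootedColoring hconn.preconnected r)
  simpa using h

theorem distinguishingChromaticNumber_middleGraph_of_isRegularOfDegree [Finite V]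
    [G.LocallyFinite] {d : ℕ} (hconn : G.Connected) (hreg : G.IsRegularOfDegree d)
    {c : G.edgeSet → Fin d} (hc : IsProperEdgeColoring G c)
    (hnot : ∀ c : G.edgeSet → Fin (d + 1),
      IsProperEdgeColoring G c → ¬ IsDistinguishingEdgeColoring G c) :
    distinguishingChromaticNumber (middleGraph G) = d + 2 := by
  refine le_antisymm (by simpa using hc.distinguishingChromaticNumber_middleGraph_le hconn) ?_
  by_contra! hlt
  obtain ⟨b, hp, hd⟩ :=
    exists_coloring_of_distinguishingChromaticNumber_le (Nat.le_of_lt_succ hlt)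
  exact hnot _ hp.isProperEdgeColoring_comp_inr
    (hd.isDistinguishingEdgeColoring_comp_inr hp fun v ↦ by simp [hreg.degree_eq v])

theorem distinguishingChromaticNumber_middleGraph_of_iso [Fintype V] [Fintype W]
    [DecidableRel G.Adj] [DecidableRel H.Adj] {d : ℕ} (e : G ≃g H) (hconn : G.Connected)
    (hreg : H.IsRegularOfDegree d) {c : H.edgeSet → Fin d} (hc : IsProperEdgeColoring H c)
    (hnot : ∀ c : H.edgeSet → Fin (d + 1),
      IsProperEdgeColoring H c → ¬ IsDistinguishingEdgeColoring H c) :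
    distinguishingChromaticNumber (middleGraph G) = G.maxDegree + 2 := by
  have hconnH : H.Connected := e.connected_iff.1 hconn
  have := hconnH.nonempty
  rw [distinguishingChromaticNumber_congr (middleGraphCongr e), e.maxDegree_eq, hreg.maxDegree_eq]
  exact distinguishingChromaticNumber_middleGraph_of_isRegularOfDegree hconnH hreg hc hnot

end MiddleGraph

section CycleGraph

variable {n : ℕ} {α : Type*}

/-- The edge of the cycle graph that joins `i` to `i + 1`. -/
def cycleEdge (i : Fin (n + 3)) : (cycleGraph (n + 3)).edgeSet :=
  ⟨s(i, i + 1), Or.inr (add_sub_cancel_left i 1)⟩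

lemma cycleEdge_injective : (cycleEdge (n := n)).Injective := by
  have htwo : (1 + 1 : Fin (n + 3)) ≠ 0 := ne_of_beq_false rfl
  intro i j hij
  rcases Sym2.eq_iff.1 (Subtype.ext_iff.1 hij) with ⟨h, -⟩ | ⟨rfl, h⟩
  · exact h
  · exact absurd (by simpa [add_assoc] using h) htwo

lemma cycleEdge_surjective : (cycleEdge (n := n)).Surjective := by
  rintro ⟨e, he⟩
  induction e with
  | _ u v =>
    rcases cycleGraph_adj.1 he with h | h
    · obtain rfl : u = v + 1 := sub_eq_iff_eq_add'.1 h
      exact ⟨v, Subtype.ext Sym2.eq_swap⟩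
    · obtain rfl : v = u + 1 := sub_eq_iff_eq_add'.1 h
      exact ⟨u, rfl⟩

lemma lineGraph_adj_cycleEdge {i j : Fin (n + 3)} :
    (cycleGraph (n + 3)).lineGraph.Adj (cycleEdge i) (cycleEdge j) ↔
      (cycleGraph (n + 3)).Adj i j := by
  rw [lineGraph_adj_iff_exists, cycleEdge_injective.ne_iff, cycleGraph_adj]
  simp only [cycleEdge, Sym2.mem_iff]
  constructor
  · rintro ⟨hij, v, rfl | rfl, hv | hv⟩
    · exact absurd hv hij
    · simp [hv]
    · simp [← hv]
    · exact absurd (add_right_cancel hv) hij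
  · intro h
    refine ⟨(cycleGraph_adj.2 h).ne, ?_⟩
    rcases h with h | h
    · exact ⟨i, .inl rfl, .inr (sub_eq_iff_eq_add'.1 h)⟩
    · exact ⟨j, .inr (sub_eq_iff_eq_add'.1 h), .inl rfl⟩

/-- Cycle graphs are isomorphic to their line graphs. -/
noncomputable def cycleGraphIsoLineGraph (n : ℕ) :
    cycleGraph (n + 3) ≃g (cycleGraph (n + 3)).lineGraph where
  toEquiv := Equiv.ofBijective cycleEdge ⟨cycleEdge_injective, cycleEdge_surjective⟩
  map_rel_iff' := lineGraph_adj_cycleEdge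

lemma IsProperEdgeColoring.cycleEdge_ne {c : (cycleGraph (n + 3)).edgeSet → α}
    (hc : IsProperEdgeColoring _ c) (i : Fin (n + 3)) :
    c (cycleEdge i) ≠ c (cycleEdge (i + 1)) :=
  isProperEdgeColoring_iff_lineGraph.1 hc _ _
    (lineGraph_adj_cycleEdge.2 (cycleGraph_adj.2 (.inr (add_sub_cancel_left i 1))))

lemma exists_isProperEdgeColoring_cycleGraph_of_even (hn : Even (n + 3)) :
    ∃ c : (cycleGraph (n + 3)).edgeSet → Fin 2, IsProperEdgeColoring _ c := by
  obtain ⟨b⟩ := (cycleGraph.bicoloring_of_even (n + 3) hn).colorable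
  let e := (cycleGraphIsoLineGraph n).symm
  exact ⟨b ∘ e, isProperEdgeColoring_iff_lineGraph.2 fun _ _ h ↦ b.valid (e.map_adj_iff.2 h)⟩

/-- The rotation `v ↦ v + a` of the cycle graph. -/
def cycleGraphRotate (a : Fin (n + 3)) : cycleGraph (n + 3) ≃g cycleGraph (n + 3) where
  toEquiv := Equiv.addRight a
  map_rel_iff' := by simp [cycleGraph_adj]

/-- The reflection `v ↦ a - v` of the cycle graph. -/
def cycleGraphReflect (a : Fin (n + 3)) : cycleGraph (n + 3) ≃g cycleGraph (n + 3) where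
  toEquiv := Equiv.subLeft a
  map_rel_iff' := by simp [cycleGraph_adj, or_comm]

lemma mapEdgeSet_cycleGraphRotate (a j : Fin (n + 3)) :
    (cycleGraphRotate a).mapEdgeSet (cycleEdge j) = cycleEdge (j + a) :=
  Subtype.ext (congrArg (s(j + a, ·)) (add_right_comm j 1 a))

lemma mapEdgeSet_cycleGraphReflect (i j : Fin (n + 3)) :
    (cycleGraphReflect (i + i + 1)).mapEdgeSet (cycleEdge j) = cycleEdge (i + i - j) := by
  refine Subtype.ext ?_
  change s(i + i + 1 - j, i + i + 1 - (j + 1)) = s(i + i - j, i + i - j + 1)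
  rw [Sym2.eq_swap]
  congr 1 <;> abel_nf

variable {c : (cycleGraph (n + 3)).edgeSet → α}

lemma not_isDistinguishingEdgeColoring_of_cycleGraphRotate {a : Fin (n + 3)} (ha : a ≠ 0)
    (h : ∀ j, c (cycleEdge (j + a)) = c (cycleEdge j)) : ¬ IsDistinguishingEdgeColoring _ c := by
  intro hd
  refine ha (add_eq_left.1 (hd (cycleGraphRotate a) ?_ a))
  refine cycleEdge_surjective.forall.2 fun j ↦ ?_
  rw [mapEdgeSet_cycleGraphRotate, h]

lemma not_isDistinguishingEdgeColoring_of_cycleGraphReflect {i : Fin (n + 3)}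
    (h : ∀ j, c (cycleEdge (i - j)) = c (cycleEdge (i + j))) :
    ¬ IsDistinguishingEdgeColoring _ c := by
  intro hd
  have hfix : i + i + 1 - i = i := by
    refine hd (cycleGraphReflect (i + i + 1)) (cycleEdge_surjective.forall.2 fun j ↦ ?_) i
    rw [mapEdgeSet_cycleGraphReflect]
    convert! h (j - i) using 3 <;> abel
  simp [add_assoc] at hfix

end CycleGraph

section SmallCycles

variable {α : Type*}

lemma apply_sub_eq_apply_add_of_eq_of_eq {x : Fin 6 → α} {i : Fin 6} (h₁ : x (i - 1) = x (i + 1))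
    (h₂ : x (i - 2) = x (i + 2)) (j : Fin 6) : x (i - j) = x (i + j) := by
  have hreflect : ∀ i j : Fin 6, i - j = i + j ∨
      (i - j = i - 1 ∧ i + j = i + 1 ∨ i - j = i + 1 ∧ i + j = i - 1) ∨
      (i - j = i - 2 ∧ i + j = i + 2 ∨ i - j = i + 2 ∧ i + j = i - 2) := by decide
  grind

variable [Fintype α]

lemma exists_reflection_of_card_le_three (hα : Fintype.card α ≤ 3) {x : Fin 4 → α}
    (hx : ∀ i, x i ≠ x (i + 1)) : ∃ i, ∀ j, x (i - j) = x (i + j) := by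
  obtain ⟨i, j, hij, h⟩ := Fintype.exists_ne_map_eq_of_card_lt x (by simp; omega)
  have hopp : j = i + 2 := by
    have hcycle : ∀ i j : Fin 4, i ≠ j → j ≠ i + 1 → i ≠ j + 1 → j = i + 2 := by decide
    exact hcycle i j hij (fun hj ↦ hx i (hj ▸ h)) (fun hi ↦ hx j (hi ▸ h.symm))
  have hreflect : ∀ i k : Fin 4, i + 1 - k = i + 1 + k ∨
      i + 1 - k = i ∧ i + 1 + k = i + 2 ∨ i + 1 - k = i + 2 ∧ i + 1 + k = i := by decide
  refine ⟨i + 1, fun k ↦ ?_⟩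
  rcases hreflect i k with hk | ⟨hk, hk'⟩ | ⟨hk, hk'⟩
  · rw [hk]
  · rw [hk, hk', h, hopp]
  · rw [hk, hk', h, hopp]

lemma eq_of_ne_of_card_le_three (hα : Fintype.card α ≤ 3) {a b c d : α} (hab : a ≠ b)
    (hca : c ≠ a) (hcb : c ≠ b) (hda : d ≠ a) (hdb : d ≠ b) : c = d :=
  eq_of_notMem_range_of_injective (f := ![a, b])
    (by simpa [Function.Injective, Fin.forall_fin_two] using ⟨hab, hab.symm⟩) (by simpa using hα)
    (by simp [hca, hcb]) (by simp [hda, hdb])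

lemma exists_reflection_of_apply_eq (hα : Fintype.card α ≤ 3) {x : Fin 6 → α}
    (hx : ∀ i, x i ≠ x (i + 1)) (h₅₁ : x 5 = x 1) : ∃ i, ∀ j, x (i - j) = x (i + j) := by
  by_cases h₄₂ : x 4 = x 2
  · exact ⟨0, apply_sub_eq_apply_add_of_eq_of_eq h₅₁ h₄₂⟩
  · have hnear : x 2 = x 0 ∨ x 4 = x 0 := by
      by_contra! hne
      exact h₄₂ (eq_of_ne_of_card_le_three hα (hx 0) hne.2 (h₅₁ ▸ hx 4) hne.1 (hx 1).symm)
    rcases hnear with h₂₀ | h₄₀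
    · have h₅₃ : x 5 = x 3 :=
        eq_of_ne_of_card_le_three hα h₄₂ (hx 4).symm (h₂₀ ▸ hx 5) (hx 3) (hx 2).symm
      exact ⟨1, apply_sub_eq_apply_add_of_eq_of_eq h₂₀.symm h₅₃⟩
    · have h₃₁ : x 3 = x 1 :=
        eq_of_ne_of_card_le_three hα h₄₂ (hx 3) (hx 2).symm (h₄₀ ▸ (hx 0).symm) (hx 1)
      exact ⟨5, apply_sub_eq_apply_add_of_eq_of_eq h₄₀ h₃₁⟩

lemma exists_rotation_or_reflection_of_card_le_three (hα : Fintype.card α ≤ 3) {x : Fin 6 → α}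
    (hx : ∀ i, x i ≠ x (i + 1)) :
    (∀ j, x (j + 3) = x j) ∨ ∃ i, ∀ j, x (i - j) = x (i + j) := by
  by_cases! h : ∃ i, x i = x (i + 2)
  · obtain ⟨i, hi⟩ := h
    obtain ⟨k, hk⟩ := exists_reflection_of_apply_eq hα (x := fun t ↦ x (i + 1 + t))
      (fun t ↦ by simpa only [add_assoc] using hx (i + 1 + t)) (by simpa [add_assoc] using hi)
    exact .inr ⟨i + 1 + k, fun j ↦ by simpa only [add_assoc, add_sub_assoc] using hk j⟩
  · refine .inl fun j ↦ ?_
    have h₁₂ : x (j + 1) ≠ x (j + 2) := by simpa [add_assoc] using hx (j + 1)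
    have h₂₃ : x (j + 2) ≠ x (j + 3) := by simpa [add_assoc] using hx (j + 2)
    have h₁₃ : x (j + 1) ≠ x (j + 3) := by simpa [add_assoc] using h (j + 1)
    exact eq_of_ne_of_card_le_three hα h₁₂ h₁₃.symm h₂₃.symm (hx j) (h j)

lemma IsProperEdgeColoring.not_isDistinguishingEdgeColoring_cycleGraph_four
    {c : (cycleGraph 4).edgeSet → α} (hc : IsProperEdgeColoring _ c)
    (hα : Fintype.card α ≤ 3) : ¬ IsDistinguishingEdgeColoring _ c := by
  obtain ⟨i, hi⟩ := exists_reflection_of_card_le_three hα hc.cycleEdge_ne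
  exact not_isDistinguishingEdgeColoring_of_cycleGraphReflect hi

lemma IsProperEdgeColoring.not_isDistinguishingEdgeColoring_cycleGraph_six
    {c : (cycleGraph 6).edgeSet → α} (hc : IsProperEdgeColoring _ c)
    (hα : Fintype.card α ≤ 3) : ¬ IsDistinguishingEdgeColoring _ c := by
  rcases exists_rotation_or_reflection_of_card_le_three hα hc.cycleEdge_ne with h | ⟨i, hi⟩
  · exact not_isDistinguishingEdgeColoring_of_cycleGraphRotate (by decide) h
  · exact not_isDistinguishingEdgeColoring_of_cycleGraphReflect hi

end SmallCycles

section CompleteGraph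

variable {α : Type*}

/-- The edges of `K₄`, grouped into the three perfect matchings: `(k, false)` and `(k, true)` are
the two edges of the `k`-th matching, the former being the one that contains the vertex `0`. -/
def topFinFourEdge (p : Fin 3 × Bool) : (⊤ : SimpleGraph (Fin 4)).edgeSet :=
  ⟨if p.2 then s((p.1 + 1).succ, (p.1 + 2).succ) else s(0, p.1.succ), by revert p; decide⟩

lemma topFinFourEdge_bijective : topFinFourEdge.Bijective := by
  refine (Fintype.bijective_iff_injective_and_card _).2 ⟨by decide, ?_⟩
  decide

lemma lineGraph_adj_topFinFourEdge {p q : Fin 3 × Bool} :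
    (⊤ : SimpleGraph (Fin 4)).lineGraph.Adj (topFinFourEdge p) (topFinFourEdge q) ↔
      p.1 ≠ q.1 := by
  rw [lineGraph_adj_iff_exists]
  revert p q
  decide

lemma exists_isProperEdgeColoring_topFinFour :
    ∃ c : (⊤ : SimpleGraph (Fin 4)).edgeSet → Fin 3, IsProperEdgeColoring _ c := by
  let e := Equiv.ofBijective _ topFinFourEdge_bijective
  refine ⟨fun f ↦ (e.symm f).1, isProperEdgeColoring_iff_lineGraph.2 ?_⟩
  refine e.forall_congr_right.1 fun p ↦ e.forall_congr_right.1 fun q h ↦ ?_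
  simpa using lineGraph_adj_topFinFourEdge.1 h

/-- The automorphism of `K₄` that exchanges the endpoints of both edges of the `k`-th matching. -/
def topFinFourSwap (k : Fin 3) : (⊤ : SimpleGraph (Fin 4)) ≃g (⊤ : SimpleGraph (Fin 4)) :=
  Iso.completeGraph (Equiv.swap 0 k.succ * Equiv.swap (k + 1).succ (k + 2).succ)

lemma mapEdgeSet_topFinFourSwap (k : Fin 3) (p : Fin 3 × Bool) :
    (topFinFourSwap k).mapEdgeSet (topFinFourEdge p) =
      topFinFourEdge (p.1, if p.1 = k then p.2 else !p.2) := by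
  revert k p
  decide

lemma exists_forall_ne_apply_eq_of_card_le_four [Fintype α] (hα : Fintype.card α ≤ 4)
    {x : Fin 3 × Bool → α} (hx : ∀ p q, p.1 ≠ q.1 → x p ≠ x q) :
    ∃ k, ∀ l ≠ k, x (l, false) = x (l, true) := by
  by_contra! h
  obtain ⟨k, -, hk⟩ := h 0
  obtain ⟨l, hlk, hl⟩ := h k
  have hthird : ∀ k l : Fin 3, ∃ m, m ≠ k ∧ m ≠ l := by decide
  obtain ⟨m, hmk, hml⟩ := hthird k l
  have hnodup : [x (k, false), x (k, true), x (l, false), x (l, true), x (m, false)].Nodup := by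
    simp [hk, hl, hx, hlk.symm, hmk.symm, hml.symm]
  exact absurd (hnodup.length_le_card.trans hα) (by simp)

lemma IsProperEdgeColoring.not_isDistinguishingEdgeColoring_topFinFour [Fintype α]
    {c : (⊤ : SimpleGraph (Fin 4)).edgeSet → α} (hc : IsProperEdgeColoring _ c)
    (hα : Fintype.card α ≤ 4) : ¬ IsDistinguishingEdgeColoring _ c := by
  intro hd
  obtain ⟨k, hk⟩ := exists_forall_ne_apply_eq_of_card_le_four hα (x := c ∘ topFinFourEdge)
    fun p q h ↦ isProperEdgeColoring_iff_lineGraph.1 hc _ _ (lineGraph_adj_topFinFourEdge.2 h)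
  have hfix : topFinFourSwap k 0 = 0 := by
    refine hd _ (topFinFourEdge_bijective.surjective.forall.2 fun ⟨l, b⟩ ↦ ?_) 0
    rw [mapEdgeSet_topFinFourSwap]
    by_cases hl : l = k
    · simp [hl]
    · cases b
      · simpa [hl] using (hk l hl).symm
      · simpa [hl] using hk l hl
  have hmove : ∀ k, topFinFourSwap k 0 ≠ 0 := by decide
  exact hmove k hfix

end CompleteGraph

section CompleteBipartiteGraph

variable {α ι κ : Type*}

lemma isRegularOfDegree_completeBipartiteGraph [Fintype ι]
    [(completeBipartiteGraph ι ι).LocallyFinite] :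
    (completeBipartiteGraph ι ι).IsRegularOfDegree (Fintype.card ι) := by
  rintro (i | i) <;> rw [← card_neighborFinset_eq_degree, ← Finset.card_univ]
  · rw [← Finset.card_map (.inr : ι ↪ ι ⊕ ι)]
    congr 1
    ext (j | j) <;> simp
  · rw [← Finset.card_map (.inl : ι ↪ ι ⊕ ι)]
    congr 1
    ext (j | j) <;> simp

/-- The edges of a complete bipartite graph are the pairs of vertices from the two parts. -/
def completeBipartiteEdge (p : ι × κ) : (completeBipartiteGraph ι κ).edgeSet :=
  ⟨s(.inl p.1, .inr p.2), .inl ⟨rfl, rfl⟩⟩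

lemma completeBipartiteEdge_bijective : (completeBipartiteEdge (ι := ι) (κ := κ)).Bijective := by
  constructor
  · rintro ⟨i, j⟩ ⟨i', j'⟩ h
    simpa [completeBipartiteEdge] using Subtype.ext_iff.1 h
  · rintro ⟨e, he⟩
    induction e with
    | _ u v =>
      rcases u with i | i <;> rcases v with j | j
      · simp at he
      · exact ⟨(i, j), rfl⟩
      · exact ⟨(j, i), Subtype.ext Sym2.eq_swap⟩
      · simp at he

lemma lineGraph_adj_completeBipartiteEdge {p q : ι × κ} :
    (completeBipartiteGraph ι κ).lineGraph.Adj (completeBipartiteEdge p)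
      (completeBipartiteEdge q) ↔ p ≠ q ∧ (p.1 = q.1 ∨ p.2 = q.2) := by
  rw [lineGraph_adj_iff_exists, completeBipartiteEdge_bijective.injective.ne_iff]
  simp [completeBipartiteEdge]

lemma exists_isProperEdgeColoring_completeBipartiteGraph (ι : Type*) [AddGroup ι] :
    ∃ c : (completeBipartiteGraph ι ι).edgeSet → ι, IsProperEdgeColoring _ c := by
  let e := Equiv.ofBijective _ (completeBipartiteEdge_bijective (ι := ι) (κ := ι))
  refine ⟨fun f ↦ (e.symm f).1 + (e.symm f).2, isProperEdgeColoring_iff_lineGraph.2 ?_⟩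
  refine e.forall_congr_right.1 fun p ↦ e.forall_congr_right.1 fun q h ↦ ?_
  obtain ⟨hne, h | h⟩ := lineGraph_adj_completeBipartiteEdge.1 h
  · simpa [h] using fun h' ↦ hne (Prod.ext h h')
  · simpa [h] using fun h' ↦ hne (Prod.ext h' h)

/-- The isomorphism of complete bipartite graphs that exchanges the two parts along bijections. -/
def completeBipartiteGraphFlip (p : ι ≃ κ) :
    completeBipartiteGraph ι κ ≃g completeBipartiteGraph ι κ where
  toEquiv := (Equiv.sumComm ι κ).trans (Equiv.sumCongr p.symm p)
  map_rel_iff' := by simp [or_comm]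

lemma mapEdgeSet_completeBipartiteGraphFlip (p : ι ≃ κ) (i : ι) (j : κ) :
    (completeBipartiteGraphFlip p).mapEdgeSet (completeBipartiteEdge (i, j)) =
      completeBipartiteEdge (p.symm j, p i) :=
  Subtype.ext Sym2.eq_swap

lemma not_isDistinguishingEdgeColoring_of_completeBipartiteGraphFlip [Nonempty ι]
    {c : (completeBipartiteGraph ι κ).edgeSet → α} (p : ι ≃ κ)
    (h : ∀ i j, c (completeBipartiteEdge (p.symm j, p i)) = c (completeBipartiteEdge (i, j))) :
    ¬ IsDistinguishingEdgeColoring _ c := by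
  intro hd
  obtain ⟨i⟩ := ‹Nonempty ι›
  refine Sum.inr_ne_inl (hd (completeBipartiteGraphFlip p) ?_ (.inl i))
  refine completeBipartiteEdge_bijective.surjective.forall.2 fun ⟨i, j⟩ ↦ ?_
  rw [mapEdgeSet_completeBipartiteGraphFlip, h]

-- A row misses a single color, so there are too few rows for each color to be missed somewhere.
lemma exists_perm_forall_apply_eq_of_card_eq_add_one [Fintype ι] [Fintype α] {A : ι → ι → α}
    (hrow : ∀ i, (A i).Injective) (hcol : ∀ j, (A · j).Injective)
    (hcard : Fintype.card α = Fintype.card ι + 1) :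
    ∃ (m : Equiv.Perm ι) (a : α), ∀ i, A i (m i) = a := by
  obtain ⟨a, ha⟩ : ∃ a, ∀ i, ∃ j, A i j = a := by
    by_contra! h
    choose row hmiss using h
    have hrow_inj : row.Injective := by
      intro a b hab
      refine eq_of_notMem_range_of_injective (hrow (row a)) hcard.le ?_ ?_
      · simpa using hmiss a
      · simpa [hab] using hmiss b
    exact absurd (Fintype.card_le_of_injective row hrow_inj) (by omega)
  choose m hm using ha
  have hm_inj : m.Injective := by
    intro i j hij
    refine hcol (m i) ?_
    change A i (m i) = A j (m i)
    rw [hm i, hij, hm j]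
  exact ⟨Equiv.ofBijective m (Finite.injective_iff_bijective.1 hm_inj), a, hm⟩

/-- The off-diagonal cells of a `3 × 3` array, in a cyclic order in which consecutive cells share
their row or their column. -/
def hexagonCell : Fin 6 → Fin 3 × Fin 3 :=
  ![(0, 1), (0, 2), (1, 2), (1, 0), (2, 0), (2, 1)]

lemma forall_of_forall_diag_of_forall_hexagonCell {P : Fin 3 → Fin 3 → Prop}
    (hdiag : ∀ i, P i i) (hcell : ∀ t, P (hexagonCell t).1 (hexagonCell t).2) (i j : Fin 3) :
    P i j := by
  have hsurj : ∀ i j, i ≠ j → ∃ t, hexagonCell t = (i, j) := by decide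
  rcases eq_or_ne i j with rfl | hij
  · exact hdiag i
  · obtain ⟨t, ht⟩ := hsurj i j hij
    simpa [ht] using hcell t

lemma apply_hexagonCell_ne_apply_hexagonCell_succ {B : Fin 3 → Fin 3 → α}
    (hrow : ∀ i, (B i).Injective) (hcol : ∀ j, (B · j).Injective) (t : Fin 6) :
    B (hexagonCell t).1 (hexagonCell t).2 ≠
      B (hexagonCell (t + 1)).1 (hexagonCell (t + 1)).2 := by
  have hstep : ∀ t,
      (hexagonCell t).1 = (hexagonCell (t + 1)).1 ∧ (hexagonCell t).2 ≠ (hexagonCell (t + 1)).2 ∨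
      (hexagonCell t).2 = (hexagonCell (t + 1)).2 ∧ (hexagonCell t).1 ≠ (hexagonCell (t + 1)).1 :=
    by decide
  rcases hstep t with ⟨hi, hj⟩ | ⟨hj, hi⟩
  · exact hi ▸ (hrow _).ne hj
  · exact hj ▸ (hcol _).ne hi

-- Deleting a monochromatic perfect matching from `K₃,₃` leaves a hexagon with three colors.
lemma exists_perm_forall_apply_symm_apply_eq_of_diag [Fintype α] (hα : Fintype.card α = 4)
    {B : Fin 3 → Fin 3 → α} (hrow : ∀ i, (B i).Injective) (hcol : ∀ j, (B · j).Injective)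
    {a : α} (hdiag : ∀ i, B i i = a) :
    ∃ s : Equiv.Perm (Fin 3), ∀ i j, B (s.symm j) (s i) = B i j := by
  classical
  have hoff : ∀ t, (hexagonCell t).1 ≠ (hexagonCell t).2 := by decide
  let x (t : Fin 6) : {b // b ≠ a} :=
    ⟨B (hexagonCell t).1 (hexagonCell t).2,
      fun h ↦ hoff t (hrow _ (h.trans (hdiag (hexagonCell t).1).symm)).symm⟩
  have hx (t : Fin 6) : x t ≠ x (t + 1) := fun h ↦
    apply_hexagonCell_ne_apply_hexagonCell_succ hrow hcol t (congrArg Subtype.val h)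
  have hcard : Fintype.card {b // b ≠ a} ≤ 3 := by simp [Fintype.card_subtype_compl, hα]
  rcases exists_rotation_or_reflection_of_card_le_three hcard hx with hrot | ⟨k, hrefl⟩
  · have hswap : ∀ t, hexagonCell (t + 3) = (hexagonCell t).swap := by decide
    refine ⟨.refl _, forall_of_forall_diag_of_forall_hexagonCell (fun _ ↦ rfl) fun t ↦ ?_⟩
    simpa [x, hswap] using congrArg Subtype.val (hrot t)
  · let s (k : Fin 6) := Equiv.swap (hexagonCell k).1 (hexagonCell k).2
    have hswap : ∀ k t, hexagonCell (k - (t - k)) = ((hexagonCell t).map (s k) (s k)).swap := by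
      decide
    refine ⟨s k, forall_of_forall_diag_of_forall_hexagonCell (fun i ↦ ?_) fun t ↦ ?_⟩
    · rw [Equiv.symm_swap, hdiag, hdiag]
    · simpa [x, hswap, s] using congrArg Subtype.val (hrefl (t - k))

lemma IsProperEdgeColoring.not_isDistinguishingEdgeColoring_completeBipartiteGraph_three [Fintype α]
    {c : (completeBipartiteGraph (Fin 3) (Fin 3)).edgeSet → α} (hc : IsProperEdgeColoring _ c)
    (hα : Fintype.card α = 4) : ¬ IsDistinguishingEdgeColoring _ c := by
  let A (i j : Fin 3) : α := c (completeBipartiteEdge (i, j))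
  have hrow (i : Fin 3) : (A i).Injective := by
    intro j j' h
    have hedge := hc.injOn_incident (.inl i) (by simp [completeBipartiteEdge])
      (by simp [completeBipartiteEdge]) h
    exact congrArg Prod.snd (completeBipartiteEdge_bijective.injective hedge)
  have hcol (j : Fin 3) : (A · j).Injective := by
    intro i i' h
    have hedge := hc.injOn_incident (.inr j) (by simp [completeBipartiteEdge])
      (by simp [completeBipartiteEdge]) h
    exact congrArg Prod.fst (completeBipartiteEdge_bijective.injective hedge)
  obtain ⟨m, a, hm⟩ := exists_perm_forall_apply_eq_of_card_eq_add_one hrow hcol (by simpa using hα)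
  obtain ⟨s, hs⟩ := exists_perm_forall_apply_symm_apply_eq_of_diag hα
    (B := fun i j ↦ A i (m j)) (fun i ↦ (hrow i).comp m.injective) (fun j ↦ hcol (m j)) hm
  refine not_isDistinguishingEdgeColoring_of_completeBipartiteGraphFlip (s.trans m) fun i j ↦ ?_
  simpa [A] using hs i (m.symm j)

end CompleteBipartiteGraph

/-- For a finite simple connected graph `G` of order `≥ 3` isomorphic
to one of `C₄`, `K₄`, `C₆`, `K₃,₃`, we have `χ_D(M(G)) = Δ(G) + 2`. -/
theorem chromaticDistinguishing_middleGraph_eq_maxDegree_add_two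
    {V : Type*} [Fintype V] [DecidableEq V] (G : SimpleGraph V) [DecidableRel G.Adj]
    (hconn : G.Connected) (hcard : 3 ≤ Fintype.card V)
    (hexc : Nonempty (G ≃g cycleGraph 4) ∨ Nonempty (G ≃g (⊤ : SimpleGraph (Fin 4))) ∨
      Nonempty (G ≃g cycleGraph 6) ∨ Nonempty (G ≃g completeBipartiteGraph (Fin 3) (Fin 3))) :
    distinguishingChromaticNumber (middleGraph G) = G.maxDegree + 2 := by
  classical
  rcases hexc with ⟨⟨e⟩⟩ | ⟨⟨e⟩⟩ | ⟨⟨e⟩⟩ | ⟨⟨e⟩⟩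
  · obtain ⟨c, hc⟩ := exists_isProperEdgeColoring_cycleGraph_of_even (n := 1) (by decide)
    exact distinguishingChromaticNumber_middleGraph_of_iso e hconn
      (fun _ ↦ cycleGraph_degree_three_le) hc fun _ h ↦
        h.not_isDistinguishingEdgeColoring_cycleGraph_four (by simp)
  · obtain ⟨c, hc⟩ := exists_isProperEdgeColoring_topFinFour
    exact distinguishingChromaticNumber_middleGraph_of_iso e hconn IsRegularOfDegree.top hc
      fun _ h ↦ h.not_isDistinguishingEdgeColoring_topFinFour (by simp)
  · obtain ⟨c, hc⟩ := exists_isProperEdgeColoring_cycleGraph_of_even (n := 3) (by decide)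
    exact distinguishingChromaticNumber_middleGraph_of_iso e hconn
      (fun _ ↦ cycleGraph_degree_three_le) hc fun _ h ↦
        h.not_isDistinguishingEdgeColoring_cycleGraph_six (by simp)
  · obtain ⟨c, hc⟩ := exists_isProperEdgeColoring_completeBipartiteGraph (Fin 3)
    exact distinguishingChromaticNumber_middleGraph_of_iso e hconn
      isRegularOfDegree_completeBipartiteGraph hc fun _ h ↦
        h.not_isDistinguishingEdgeColoring_completeBipartiteGraph_three (by simp)
end

section
/- Let G be a finite simple connected graph of order n ≥ 3 with maximum degree Δ(G). If the distinguishing chromatic index of G satisfies χ'_D(G) ≤ Δ(G) + 1, then the distinguishing chromatic index of the endline graph satisfies χ'_D(G⁺) ≤ Δ(G) + 1. -/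
/-!
Every edge of `G⁺` is either an edge of `G` or the endline edge at a vertex of `G`. A coloring of
`G` with more than `Δ(G)` colors leaves at each vertex `v` a color that is missing there; giving
that color to the endline edge at `v` keeps the coloring proper. The base vertices of `G⁺` are those
with at least two neighbors, so every automorphism of `G⁺` is induced by an automorphism of `G`, and
the extension of a distinguishing coloring is distinguishing whatever colors the endline edges get.
For the index of `G` to provide a coloring in the first place, some coloring must be proper and
distinguishing: the one with pairwise distinct colors is, since `G` is not a single edge.
-/

open SimpleGraph

namespace endlineGraph

variable {V W α : Type*} {G : SimpleGraph V} {H : SimpleGraph W}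

theorem adj_inl_inl {u v : V} : (endlineGraph G).Adj (Sum.inl u) (Sum.inl v) ↔ G.Adj u v := by
  simpa [endlineGraph, G.adj_comm v u] using SimpleGraph.Adj.ne

theorem adj_inr_left {v : V} {x : V ⊕ V} :
    (endlineGraph G).Adj (Sum.inr v) x ↔ x = Sum.inl v := by
  cases x <;> simp [endlineGraph]

theorem adj_inl_inr {u v : V} : (endlineGraph G).Adj (Sum.inl u) (Sum.inr v) ↔ u = v := by
  rw [SimpleGraph.adj_comm, adj_inr_left, Sum.inl.injEq]

theorem exists_eq_inl_of_adj_of_adj {x y z : V ⊕ V} (hy : (endlineGraph G).Adj x y)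
    (hz : (endlineGraph G).Adj x z) (hyz : y ≠ z) : ∃ v, x = Sum.inl v := by
  rcases x with v | v
  · exact ⟨v, rfl⟩
  · exact absurd ((adj_inr_left.1 hy).trans (adj_inr_left.1 hz).symm) hyz

theorem exists_apply_inl_eq_inl (φ : endlineGraph G ≃g endlineGraph H) {v : V}
    (hv : ¬G.IsIsolated v) : ∃ w, φ (Sum.inl v) = Sum.inl w := by
  obtain ⟨u, hu⟩ := exists_adj_iff_not_isIsolated.2 hv
  exact exists_eq_inl_of_adj_of_adj (φ.map_adj_iff.2 (adj_inl_inl.2 hu))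
    (φ.map_adj_iff.2 (adj_inl_inr.2 rfl)) (φ.injective.ne Sum.inl_ne_inr)

theorem exists_iso_apply_inl (hG : ∀ v, ¬G.IsIsolated v) (hH : ∀ w, ¬H.IsIsolated w)
    (φ : endlineGraph G ≃g endlineGraph H) :
    ∃ ψ : G ≃g H, ∀ v, φ (Sum.inl v) = Sum.inl (ψ v) := by
  choose f hf using fun v => exists_apply_inl_eq_inl φ (hG v)
  choose g hg using fun w => exists_apply_inl_eq_inl φ.symm (hH w)
  have hgf : Function.LeftInverse g f := fun v =>
    Sum.inl_injective (by rw [← hg, ← hf, RelIso.symm_apply_apply])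
  have hfg : Function.RightInverse g f := fun w =>
    Sum.inl_injective (by rw [← hf, ← hg, RelIso.apply_symm_apply])
  refine ⟨⟨⟨f, g, hgf, hfg⟩, fun {a b} => ?_⟩, hf⟩
  change H.Adj (f a) (f b) ↔ G.Adj a b
  rw [← adj_inl_inl, ← hf, ← hf, φ.map_adj_iff, adj_inl_inl]

theorem exists_iso_apply_eq_map (hG : ∀ v, ¬G.IsIsolated v) (hH : ∀ w, ¬H.IsIsolated w)
    (φ : endlineGraph G ≃g endlineGraph H) : ∃ ψ : G ≃g H, ∀ x, φ x = Sum.map ψ ψ x := by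
  obtain ⟨ψ, hψ⟩ := exists_iso_apply_inl hG hH φ
  refine ⟨ψ, Sum.rec hψ fun v => ?_⟩
  have hadj : (endlineGraph H).Adj (Sum.inl (ψ v)) (φ (Sum.inr v)) :=
    hψ v ▸ φ.map_adj_iff.2 (adj_inl_inr.2 rfl)
  rcases hv : φ (Sum.inr v) with w | w
  · have : φ (Sum.inl (ψ.symm w)) = φ (Sum.inr v) := by rw [hψ, RelIso.apply_symm_apply, hv]
    exact absurd (φ.injective this) Sum.inl_ne_inr
  · rw [hv, adj_inl_inr] at hadj
    rw [Sum.map_inr, hadj]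

/-- The inclusion of `G` into its endline graph `G⁺`. -/
def baseEmbedding (G : SimpleGraph V) : G ↪g endlineGraph G where
  toEmbedding := Function.Embedding.inl
  map_rel_iff' := adj_inl_inl

/-- An edge of `G`, as an edge of `G⁺`. -/
def baseEdge (e : G.edgeSet) : (endlineGraph G).edgeSet := (baseEmbedding G).mapEdgeSet e

/-- The endline edge of `G⁺` at the vertex `v` of `G`. -/
def endlineEdge (G : SimpleGraph V) (v : V) : (endlineGraph G).edgeSet :=
  ⟨s(Sum.inl v, Sum.inr v), (adj_inl_inr (G := G)).2 rfl⟩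

theorem mem_baseEdge {e : G.edgeSet} {x : V ⊕ V} :
    x ∈ (baseEdge e : Sym2 (V ⊕ V)) ↔ ∃ v ∈ (e : Sym2 V), Sum.inl v = x :=
  Sym2.mem_map

theorem mem_endlineEdge {v : V} {x : V ⊕ V} :
    x ∈ (endlineEdge G v : Sym2 (V ⊕ V)) ↔ x = Sum.inl v ∨ x = Sum.inr v :=
  Sym2.mem_iff

theorem mapEdgeSet_baseEdge {φ : endlineGraph G ≃g endlineGraph H} {ψ : G ≃g H}
    (h : ∀ v, φ (Sum.inl v) = Sum.inl (ψ v)) (e : G.edgeSet) :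
    φ.mapEdgeSet (baseEdge e) = baseEdge (ψ.mapEdgeSet e) := by
  obtain ⟨⟨u, v⟩, huv⟩ := e
  exact Subtype.ext (congrArg₂ (fun x y => s(x, y)) (h u) (h v))

theorem bijective_elim_baseEdge_endlineEdge :
    Function.Bijective (Sum.elim baseEdge (endlineEdge G)) := by
  constructor
  · refine Function.Injective.sumElim (baseEmbedding G).mapEdgeSet.injective ?_ ?_
    · intro u v huv
      have : Sum.inr u ∈ (endlineEdge G v : Sym2 (V ⊕ V)) := huv ▸ mem_endlineEdge.2 (.inr rfl)
      simpa [mem_endlineEdge] using this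
    · intro e v hev
      have : Sum.inr v ∈ (baseEdge e : Sym2 (V ⊕ V)) := hev ▸ mem_endlineEdge.2 (.inr rfl)
      simp [mem_baseEdge] at this
  · rintro ⟨⟨x, y⟩, hxy⟩
    replace hxy : (endlineGraph G).Adj x y := hxy
    rcases x with u | u <;> rcases y with v | v
    · exact ⟨.inl ⟨s(u, v), adj_inl_inl.1 hxy⟩, rfl⟩
    · obtain rfl := adj_inl_inr.1 hxy
      exact ⟨.inr u, rfl⟩
    · obtain rfl := adj_inl_inr.1 hxy.symm
      exact ⟨.inr v, Subtype.ext Sym2.eq_swap⟩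
    · exact absurd (adj_inr_left.1 hxy) Sum.inr_ne_inl

/-- The edges of `G⁺` are the edges of `G` together with one endline edge per vertex of `G`. -/
noncomputable def edgeEquiv (G : SimpleGraph V) : G.edgeSet ⊕ V ≃ (endlineGraph G).edgeSet :=
  Equiv.ofBijective _ bijective_elim_baseEdge_endlineEdge

/-- The edge coloring of `G⁺` that extends the edge coloring `c` of `G` by giving the endline edge
at each vertex `v` the color `m v`. -/
noncomputable def extendColoring (c : G.edgeSet → α) (m : V → α) :
    (endlineGraph G).edgeSet → α :=
  Sum.elim c m ∘ (edgeEquiv G).symm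

variable {c : G.edgeSet → α} {m : V → α}

theorem extendColoring_baseEdge (e : G.edgeSet) : extendColoring c m (baseEdge e) = c e :=
  congrArg (Sum.elim c m) ((edgeEquiv G).symm_apply_apply (.inl e))

theorem extendColoring_endlineEdge (v : V) : extendColoring c m (endlineEdge G v) = m v :=
  congrArg (Sum.elim c m) ((edgeEquiv G).symm_apply_apply (.inr v))

theorem isProperEdgeColoring_extendColoring (hc : IsProperEdgeColoring G c)
    (hm : ∀ v, ∀ e : G.edgeSet, v ∈ (e : Sym2 V) → c e ≠ m v) :
    IsProperEdgeColoring (endlineGraph G) (extendColoring c m) := by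
  intro e f hef ⟨x, hxe, hxf⟩
  obtain ⟨e | u, rfl⟩ := bijective_elim_baseEdge_endlineEdge.surjective e <;>
    obtain ⟨f | v, rfl⟩ := bijective_elim_baseEdge_endlineEdge.surjective f <;>
    simp only [Sum.elim_inl, Sum.elim_inr, extendColoring_baseEdge, extendColoring_endlineEdge,
      mem_baseEdge, mem_endlineEdge] at hef hxe hxf ⊢
  · obtain ⟨v, hve, rfl⟩ := hxe
    have hvf : v ∈ (f : Sym2 V) := by simpa using hxf
    exact hc e f (ne_of_apply_ne baseEdge hef) ⟨v, hve, hvf⟩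
  · obtain ⟨w, hwe, rfl⟩ := hxe
    obtain rfl : w = v := by simpa using hxf
    exact hm w e hwe
  · obtain ⟨w, hwf, rfl⟩ := hxf
    obtain rfl : w = u := by simpa using hxe
    exact (hm w f hwf).symm
  · obtain rfl : u = v := by rcases hxe with rfl | rfl <;> simpa using hxf
    exact absurd rfl hef

theorem isDistinguishingEdgeColoring_extendColoring (hG : ∀ v, ¬G.IsIsolated v)
    (hc : IsDistinguishingEdgeColoring G c) :
    IsDistinguishingEdgeColoring (endlineGraph G) (extendColoring c m) := by
  intro φ hφ
  obtain ⟨ψ, hψ⟩ := exists_iso_apply_eq_map hG hG φ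
  have hψc (e : G.edgeSet) : c (ψ.mapEdgeSet e) = c e := by
    simpa only [mapEdgeSet_baseEdge fun v => hψ (.inl v), extendColoring_baseEdge] using
      hφ (baseEdge e)
  have hψ_id : ⇑ψ = id := funext (hc ψ hψc)
  intro x
  rw [hψ, hψ_id, Sum.map_id_id, id]

end endlineGraph

section ProperDistinguishing

variable {V α β : Type*} {G : SimpleGraph V}

/-- `G` has an edge coloring with colors in `α` that is both proper and distinguishing, so that
`χ'_D(G)` is the least `r` for which this holds with `α = Fin r`. It can fail for every `r` (for
instance if `G` is a single edge), and then `distinguishingChromaticIndex G` is the junk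
value `0`. -/
def ProperDistinguishingEdgeColorable (G : SimpleGraph V) (α : Type*) : Prop :=
  ∃ c : G.edgeSet → α, IsProperEdgeColoring G c ∧ IsDistinguishingEdgeColoring G c

theorem ProperDistinguishingEdgeColorable.of_embedding (f : α ↪ β)
    (h : ProperDistinguishingEdgeColorable G α) : ProperDistinguishingEdgeColorable G β := by
  obtain ⟨c, hproper, hdist⟩ := h
  exact ⟨f ∘ c, fun e e' hne hv => f.injective.ne (hproper e e' hne hv),
    fun φ hφ => hdist φ fun e => f.injective (hφ e)⟩

theorem properDistinguishingEdgeColorable_fin_of_index_le {k r : ℕ}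
    (hk : ProperDistinguishingEdgeColorable G (Fin k)) (h : distinguishingChromaticIndex G ≤ r) :
    ProperDistinguishingEdgeColorable G (Fin r) :=
  have hmin : ProperDistinguishingEdgeColorable G (Fin (distinguishingChromaticIndex G)) :=
    Nat.sInf_mem (s := {r | ProperDistinguishingEdgeColorable G (Fin r)}) ⟨k, hk⟩
  hmin.of_embedding (Fin.castLEEmb h)

theorem isDistinguishingEdgeColoring_of_injective {c : G.edgeSet → α} (hc : Function.Injective c)
    (hvert : ∀ v, ¬G.IsIsolated v)
    (hedge : ∀ u v, G.Adj u v → ∃ w, w ≠ u ∧ w ≠ v ∧ (G.Adj u w ∨ G.Adj v w)) :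
    IsDistinguishingEdgeColoring G c := by
  intro φ hφ v
  have hfix {a b : V} (hab : G.Adj a b) : s(φ a, φ b) = s(a, b) :=
    congrArg Subtype.val (hc (hφ ⟨s(a, b), hab⟩))
  obtain ⟨u, hvu⟩ := exists_adj_iff_not_isIsolated.2 (hvert v)
  obtain ⟨w, hwv, hwu, hw⟩ := hedge v u hvu
  rcases Sym2.eq_iff.1 (hfix hvu) with ⟨hv, -⟩ | ⟨hv, hu⟩
  · exact hv
  · -- `φ` swaps `v` and `u`, so it moves the third edge `hw`, which meets only one of them.
    rcases hw with hw | hw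
    · have : u ∈ s(v, w) := hv ▸ hfix hw ▸ Sym2.mem_mk_left (φ v) (φ w)
      simp [hvu.ne', hwu.symm] at this
    · have : v ∈ s(u, w) := hu ▸ hfix hw ▸ Sym2.mem_mk_left (φ u) (φ w)
      simp [hvu.ne, hwv.symm] at this

theorem exists_ne_ne_adj_or_adj_of_preconnected (hG : G.Preconnected) (hV : 3 ≤ Cardinal.mk V)
    (u v : V) : ∃ w, w ≠ u ∧ w ≠ v ∧ (G.Adj u w ∨ G.Adj v w) := by
  obtain ⟨x, hxu, hxv⟩ := Cardinal.exists_ne_ne_of_three_le hV u v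
  obtain ⟨p⟩ := hG u x
  obtain ⟨d, -, hfst, hsnd⟩ := p.exists_boundary_dart {u, v} (by simp) (by simp [hxu, hxv])
  obtain ⟨hdu, hdv⟩ := not_or.1 hsnd
  refine ⟨d.snd, hdu, hdv, ?_⟩
  exact hfst.imp (fun h : d.fst = u => h ▸ d.adj) (fun h : d.fst = v => h ▸ d.adj)

theorem properDistinguishingEdgeColorable_edgeSet (hG : G.Preconnected) (hV : 3 ≤ Cardinal.mk V) :
    ProperDistinguishingEdgeColorable G G.edgeSet := by
  have : Nontrivial V := Cardinal.one_lt_iff_nontrivial.1 (lt_of_lt_of_le (by norm_num) hV)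
  exact ⟨id, fun _ _ hne _ => hne, isDistinguishingEdgeColoring_of_injective Function.injective_id
    hG.not_isIsolated fun u v _ => exists_ne_ne_adj_or_adj_of_preconnected hG hV u v⟩

theorem exists_missing_color [Fintype α] (c : G.edgeSet → α) (v : V) [Fintype (G.neighborSet v)]
    (hv : G.degree v < Fintype.card α) :
    ∃ k, ∀ e : G.edgeSet, v ∈ (e : Sym2 V) → c e ≠ k := by
  let colorTo : G.neighborSet v → α := fun w => c ⟨s(v, w), w.2⟩
  have hnot : ¬Function.Surjective colorTo := fun hsurj =>
    hv.not_ge (G.card_neighborSet_eq_degree v ▸ Fintype.card_le_of_surjective colorTo hsurj)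
  obtain ⟨k, hk⟩ := not_forall.1 hnot
  refine ⟨k, fun ⟨e, he⟩ hve hek => hk ?_⟩
  obtain ⟨w, rfl⟩ := Sym2.mem_iff_exists.1 hve
  exact ⟨⟨w, he⟩, hek⟩

theorem ProperDistinguishingEdgeColorable.endlineGraph [Fintype α] [G.LocallyFinite]
    (hvert : ∀ v, ¬G.IsIsolated v) (hdeg : ∀ v, G.degree v < Fintype.card α)
    (h : ProperDistinguishingEdgeColorable G α) :
    ProperDistinguishingEdgeColorable (endlineGraph G) α := by
  obtain ⟨c, hproper, hdist⟩ := h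
  choose m hm using fun v => exists_missing_color c v (hdeg v)
  exact ⟨endlineGraph.extendColoring c m,
    endlineGraph.isProperEdgeColoring_extendColoring hproper hm,
    endlineGraph.isDistinguishingEdgeColoring_extendColoring hvert hdist⟩

theorem chromaticDistinguishingIndex_endlineGraph_le_general [G.LocallyFinite] {k r : ℕ}
    (hvert : ∀ v, ¬G.IsIsolated v) (hdeg : ∀ v, G.degree v < r)
    (hk : ProperDistinguishingEdgeColorable G (Fin k)) (h : distinguishingChromaticIndex G ≤ r) :
    distinguishingChromaticIndex (endlineGraph G) ≤ r :=
  Nat.sInf_le <| (properDistinguishingEdgeColorable_fin_of_index_le hk h).endlineGraph hvert <| by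
    simpa only [Fintype.card_fin] using hdeg

end ProperDistinguishing

/-- If `G` is a finite simple connected graph of order `≥ 3` with
`χ'_D(G) ≤ Δ(G) + 1`, then `χ'_D(G⁺) ≤ Δ(G) + 1`. -/
theorem chromaticDistinguishingIndex_endlineGraph_le
    {V : Type*} [Fintype V] [DecidableEq V] (G : SimpleGraph V) [DecidableRel G.Adj]
    (hconn : G.Connected) (hcard : 3 ≤ Fintype.card V)
    (h : distinguishingChromaticIndex G ≤ G.maxDegree + 1) :
    distinguishingChromaticIndex (endlineGraph G) ≤ G.maxDegree + 1 := by
  have hV : 3 ≤ Cardinal.mk V := by rw [Cardinal.mk_fintype]; exact_mod_cast hcard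
  have : Nontrivial V := Fintype.one_lt_card_iff_nontrivial.1 (by lia)
  have hcol : ProperDistinguishingEdgeColorable G (Fin (Fintype.card G.edgeSet)) :=
    (properDistinguishingEdgeColorable_edgeSet hconn.preconnected hV).of_embedding
      (Fintype.equivFin G.edgeSet).toEmbedding
  exact chromaticDistinguishingIndex_endlineGraph_le_general hconn.preconnected.not_isIsolated
    (fun v => Nat.lt_succ_of_le (G.degree_le_maxDegree v)) hcol h
end
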